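/- In the setting of the template with P = Š_1 and the construction Ω described in the context: if there is a homomorphism g : A → Ω(B), then there is a homomorphism f : Γ(A) → B; explicitly, any map f that sends each Š-edge s ∈ Š^A to some witness of the edge g^{Š}(s) ∈ Š^{Ω(B)} is such a homomorphism. -/

import Mathlib

/-!
Call `f : Γ(A) → B` a witness map for a homomorphism `g : A → Ω(B)` if it sends every `Š`-edge `s`
of `A` to a witness of `g^Š(s)`. Along a homomorphism `h : T → A`, witness maps for `g` pull back
to witness maps `f ∘ Γ(h)` for `g ∘ h`, and every edge of `Γ(A)` is the image under some `Γ(h)`,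
`h : Q_R → A`, of the edge `(x_1, …, x_k)` of `Γ(Q_R)`. It therefore suffices to treat `A = Q_R`.

For the tree `T(t)` of a V-term `t ∈ 𝒯_V`, induction on `t` shows that a witness map for
`g : T(t) → Ω(B)` belongs to the `t`-entry of `g(r_t)`, which consists of homomorphisms: its
restrictions to the subtrees lie in the entries given by the induction hypothesis, so (A1), or
(B1), applies to the image of the root edge. For edge terms one concludes with (A2) or (B2).
-/

/-- A relational signature: a type of relation symbols, each with a positive arity. -/
structure Signature : Type 1 where
  symb : Type
  ar : symb → ℕ
  ar_pos : ∀ R, 0 < ar R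

/-- A relational structure over the signature `σ`. -/
structure Struct (σ : Signature) : Type 1 where
  dom : Type
  rel : ∀ R : σ.symb, Set (Fin (σ.ar R) → dom)

variable {σ τ υ : Signature}

/-- `f` is a homomorphism of `σ`-structures from `A` to `B`. -/
def IsHom (A B : Struct σ) (f : A.dom → B.dom) : Prop :=
  ∀ R : σ.symb, ∀ x ∈ A.rel R, (fun i => f (x i)) ∈ B.rel R

/-- `A → B`: there exists a homomorphism from `A` to `B`. -/
def HomEx (A B : Struct σ) : Prop := ∃ f, IsHom A B f

/-- Terms over `σ` whose denotation is a tree rooted in a vertex: `vertex` is a V-term, and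
`pr R i ts` denotes the V-term `pr_i(edge_R(ts))`.  (An R-term `edge_R(t_1, …, t_k)` is
represented by the symbol `R` together with the tuple `ts` of V-terms.) -/
inductive VTerm (σ : Signature) : Type
  | vertex : VTerm σ
  | pr (R : σ.symb) (i : Fin (σ.ar R)) (ts : Fin (σ.ar R) → VTerm σ) : VTerm σ

/-- The domain of the tree denoted by a V-term. -/
def VTerm.domType : VTerm σ → Type
  | .vertex => PUnit
  | .pr R _ ts => (i : Fin (σ.ar R)) × (ts i).domType

/-- The root of the tree denoted by a V-term. -/
def VTerm.root : (t : VTerm σ) → t.domType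
  | .vertex => PUnit.unit
  | .pr _ i ts => ⟨i, (ts i).root⟩

/-- The domain of the tree denoted by the R-term `edge_R(ts)`: the disjoint union of the
domains of the subtrees. -/
def edgeDom (R : σ.symb) (ts : Fin (σ.ar R) → VTerm σ) : Type :=
  (i : Fin (σ.ar R)) × (ts i).domType

/-- The root edge of the tree denoted by the R-term `edge_R(ts)`. -/
def edgeRoot (R : σ.symb) (ts : Fin (σ.ar R) → VTerm σ) : Fin (σ.ar R) → edgeDom R ts :=
  fun i => ⟨i, (ts i).root⟩

/-- The relations of the tree denoted by a V-term: the relations of the disjoint subtrees,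
together with the root edge. -/
def VTerm.rel : (t : VTerm σ) → ∀ S : σ.symb, Set (Fin (σ.ar S) → t.domType)
  | .vertex, _ => ∅
  | .pr R _ ts, S =>
      {x | ∃ i : Fin (σ.ar R), ∃ y ∈ (ts i).rel S, x = fun j => ⟨i, y j⟩} ∪
      {x | ∃ h : R = S, x = fun j => edgeRoot R ts (Fin.cast (congrArg σ.ar h.symm) j)}

/-- The tree `T(t)` denoted by a V-term `t`. -/
def VTerm.tree (t : VTerm σ) : Struct σ := ⟨t.domType, t.rel⟩

/-- The tree `T(t)` denoted by the R-term `t = edge_R(ts)`. -/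
def ETerm.tree (R : σ.symb) (ts : Fin (σ.ar R) → VTerm σ) : Struct σ where
  dom := edgeDom R ts
  rel S :=
    {x | ∃ i : Fin (σ.ar R), ∃ y ∈ (ts i).rel S, x = fun j => ⟨i, y j⟩} ∪
    {x | ∃ h : R = S, x = fun j => edgeRoot R ts (Fin.cast (congrArg σ.ar h.symm) j)}

/-- The V-subterms of a V-term. -/
def VTerm.vsub : VTerm σ → Set (VTerm σ)
  | .vertex => {.vertex}
  | .pr R i ts => insert (.pr R i ts) (⋃ j, (ts j).vsub)

/-- The S-subterms of a V-term, for each `σ`-symbol `S` (an S-term `edge_S(us)` being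
represented by the tuple `us`). -/
def VTerm.esub : VTerm σ → ∀ S : σ.symb, Set (Fin (σ.ar S) → VTerm σ)
  | .vertex, _ => ∅
  | .pr R _ ts, S =>
      {us | ∃ h : R = S, us = fun j => ts (Fin.cast (congrArg σ.ar h.symm) j)} ∪
      {us | ∃ j, us ∈ (ts j).esub S}

/-- A term is either a V-term or an R-term `edge_R(ts)` for some symbol `R`. -/
def Term (σ : Signature) : Type := VTerm σ ⊕ (Σ S : σ.symb, Fin (σ.ar S) → VTerm σ)

/-- The tree denoted by a term. -/
def Term.tree : Term σ → Struct σ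
  | .inl t => t.tree
  | .inr ⟨S, ts⟩ => ETerm.tree S ts

/-- The V-subterms of a term. -/
def Term.vsub : Term σ → Set (VTerm σ)
  | .inl t => t.vsub
  | .inr ⟨_, ts⟩ => ⋃ j, (ts j).vsub

/-- The S-subterms of a term. -/
def Term.esub : Term σ → ∀ S : σ.symb, Set (Fin (σ.ar S) → VTerm σ)
  | .inl t => t.esub
  | .inr ⟨R, ts⟩ => fun S =>
      {us | ∃ h : R = S, us = fun j => ts (Fin.cast (congrArg σ.ar h.symm) j)} ∪
      {us | ∃ j, us ∈ (ts j).esub S}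

/-- `𝒯_V`: all V-subterms of the chosen terms `t_R`. -/
def TVs (tq : τ.symb → Term σ) : Set (VTerm σ) := ⋃ R, (tq R).vsub

/-- `𝒯_S`: all S-subterms of the chosen terms `t_R`. -/
def TEs (tq : τ.symb → Term σ) (S : σ.symb) : Set (Fin (σ.ar S) → VTerm σ) := ⋃ R, (tq R).esub S

/-- The central Pultr functor for the template where `P = Š₁` consists of a single `Š`-edge
(`Š = Sc`), `Q_R = T(tq R)`, and `ε_{i,R}` selects the `Š`-edge `x R i` of `Q_R`. -/
def GammaE (Sc : σ.symb) (tq : τ.symb → Term σ)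
    (x : ∀ R : τ.symb, Fin (τ.ar R) → (Fin (σ.ar Sc) → ((tq R).tree).dom))
    (A : Struct σ) : Struct τ where
  dom := {e : Fin (σ.ar Sc) → A.dom // e ∈ A.rel Sc}
  rel R := {y | ∃ h : ((tq R).tree).dom → A.dom, IsHom ((tq R).tree) A h ∧
      ∀ i, (y i).1 = fun j => h (x R i j)}

/-- Domain of `Ω(B)`: tuples of sets of homomorphisms `Γ(T(t)) → B`, indexed by `t ∈ 𝒯_V`,
whose entry at `vertex` is `{∅}` (the set containing the empty map, i.e. the full set of maps
from the empty domain of `Γ(T(vertex))`). -/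
def OmEDom (Sc : σ.symb) (tq : τ.symb → Term σ)
    (x : ∀ R : τ.symb, Fin (τ.ar R) → (Fin (σ.ar Sc) → ((tq R).tree).dom))
    (B : Struct τ) : Type :=
  {U : (t : {t : VTerm σ // t ∈ TVs tq}) → Set ((GammaE Sc tq x t.1.tree).dom → B.dom) //
    (∀ t, ∀ f ∈ U t, IsHom (GammaE Sc tq x t.1.tree) B f) ∧
    (∀ h : VTerm.vertex ∈ TVs tq, U ⟨.vertex, h⟩ = Set.univ)}

open Classical in
/-- The entry of `U` at the V-term `t` (by convention `∅` if `t ∉ 𝒯_V`). -/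
noncomputable def UextE (Sc : σ.symb) (tq : τ.symb → Term σ)
    (x : ∀ R : τ.symb, Fin (τ.ar R) → (Fin (σ.ar Sc) → ((tq R).tree).dom))
    (B : Struct τ) (U : OmEDom Sc tq x B) (t : VTerm σ) :
    Set ((GammaE Sc tq x t.tree).dom → B.dom) :=
  if h : t ∈ TVs tq then U.1 ⟨t, h⟩ else ∅

/-- Restriction of a map defined on the `Š`-edges of `T(edge_S(ts))` to the `Š`-edges of the
`i`-th subtree. -/
def restrE (Sc : σ.symb) (tq : τ.symb → Term σ)
    (x : ∀ R : τ.symb, Fin (τ.ar R) → (Fin (σ.ar Sc) → ((tq R).tree).dom))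
    (B : Struct τ) (S : σ.symb) (ts : Fin (σ.ar S) → VTerm σ) (i : Fin (σ.ar S))
    (g : (GammaE Sc tq x (ETerm.tree S ts)).dom → B.dom) :
    (GammaE Sc tq x (ts i).tree).dom → B.dom :=
  fun y => g ⟨fun j => ⟨i, y.1 j⟩, Or.inl ⟨i, y.1, y.2, rfl⟩⟩

/-- `⨉_t(Us) = {f₁ ∪ ⋯ ∪ f_k : f_i ∈ (Us i)_{ts i}}` for the S-term `t = edge_S(ts)` with
`S ≠ Š`: maps on the `Š`-edges of `T(t)` all of whose restrictions lie in the prescribed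
sets. -/
def timesNE (Sc : σ.symb) (tq : τ.symb → Term σ)
    (x : ∀ R : τ.symb, Fin (τ.ar R) → (Fin (σ.ar Sc) → ((tq R).tree).dom))
    (B : Struct τ) (S : σ.symb) (ts : Fin (σ.ar S) → VTerm σ)
    (Us : Fin (σ.ar S) → OmEDom Sc tq x B) :
    Set ((GammaE Sc tq x (ETerm.tree S ts)).dom → B.dom) :=
  {g | ∀ i, restrE Sc tq x B S ts i g ∈ UextE Sc tq x B (Us i) (ts i)}

theorem rootEdgeMem (Sc : σ.symb) (ts : Fin (σ.ar Sc) → VTerm σ) :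
    edgeRoot Sc ts ∈ (ETerm.tree Sc ts).rel Sc :=
  Or.inr ⟨rfl, rfl⟩

/-- `⨉_t(Us; e) = {f₁ ∪ ⋯ ∪ f_k ∪ (r_t ↦ e) : f_i ∈ (Us i)_{ts i}}` for the `Š`-term
`t = edge_Š(ts)` with witness `e`. -/
def timesW (Sc : σ.symb) (tq : τ.symb → Term σ)
    (x : ∀ R : τ.symb, Fin (τ.ar R) → (Fin (σ.ar Sc) → ((tq R).tree).dom))
    (B : Struct τ) (ts : Fin (σ.ar Sc) → VTerm σ)
    (Us : Fin (σ.ar Sc) → OmEDom Sc tq x B) (e : B.dom) :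
    Set ((GammaE Sc tq x (ETerm.tree Sc ts)).dom → B.dom) :=
  {g | (∀ i, restrE Sc tq x B Sc ts i g ∈ UextE Sc tq x B (Us i) (ts i)) ∧
       g ⟨edgeRoot Sc ts, rootEdgeMem Sc ts⟩ = e}

/-- `e ∈ B` is a witness for the tuple `Us` of elements of `Ω(B)`: conditions (B1) and (B2). -/
def IsWitness (Sc : σ.symb) (tq : τ.symb → Term σ)
    (x : ∀ R : τ.symb, Fin (τ.ar R) → (Fin (σ.ar Sc) → ((tq R).tree).dom))
    (B : Struct τ) (Us : Fin (σ.ar Sc) → OmEDom Sc tq x B) (e : B.dom) : Prop :=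
  ∀ ts ∈ TEs tq Sc,
    (∀ i : Fin (σ.ar Sc), VTerm.pr Sc i ts ∈ TVs tq →
        ∀ g ∈ timesW Sc tq x B ts Us e, g ∈ UextE Sc tq x B (Us i) (.pr Sc i ts)) ∧
    (∀ g ∈ timesW Sc tq x B ts Us e, IsHom (GammaE Sc tq x (ETerm.tree Sc ts)) B g)

/-- The right adjoint `Ω` for the template with `P = Š₁`. -/
noncomputable def OmegaE (Sc : σ.symb) (tq : τ.symb → Term σ)
    (x : ∀ R : τ.symb, Fin (τ.ar R) → (Fin (σ.ar Sc) → ((tq R).tree).dom))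
    (B : Struct τ) : Struct σ where
  dom := OmEDom Sc tq x B
  rel S := {Us |
    (S ≠ Sc →
      (∀ ts ∈ TEs tq S, ∀ i : Fin (σ.ar S), VTerm.pr S i ts ∈ TVs tq →
          ∀ g ∈ timesNE Sc tq x B S ts Us, g ∈ UextE Sc tq x B (Us i) (.pr S i ts)) ∧
      (∀ ts ∈ TEs tq S, ∀ g ∈ timesNE Sc tq x B S ts Us,
          IsHom (GammaE Sc tq x (ETerm.tree S ts)) B g)) ∧
    (∀ heq : S = Sc, ∃ e : B.dom,
        IsWitness Sc tq x B (fun j => Us (Fin.cast (congrArg σ.ar heq.symm) j)) e)}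

theorem IsHom.comp {A B C : Struct σ} {f : B.dom → C.dom} {h : A.dom → B.dom}
    (hf : IsHom B C f) (hh : IsHom A B h) : IsHom A C (f ∘ h) :=
  fun R y hy => hf R _ (hh R y hy)

namespace VTerm

theorem self_mem_vsub (t : VTerm σ) : t ∈ t.vsub := by
  cases t with
  | vertex => exact rfl
  | pr R i ts => exact Or.inl rfl

theorem child_mem_vsub_pr (R : σ.symb) (i j : Fin (σ.ar R)) (ts : Fin (σ.ar R) → VTerm σ) :
    ts j ∈ (pr R i ts).vsub :=
  Or.inr (Set.mem_iUnion_of_mem j (ts j).self_mem_vsub)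

theorem children_mem_esub_pr (R : σ.symb) (i : Fin (σ.ar R)) (ts : Fin (σ.ar R) → VTerm σ) :
    ts ∈ (pr R i ts).esub R :=
  Or.inl ⟨rfl, rfl⟩

theorem vsub_subset_of_mem {s t : VTerm σ} (h : t ∈ s.vsub) : t.vsub ⊆ s.vsub := by
  induction s with
  | vertex =>
    obtain rfl : t = vertex := h
    rfl
  | pr R i ts ih =>
    rcases h with rfl | h
    · rfl
    · obtain ⟨j, hj⟩ := Set.mem_iUnion.1 h
      exact fun u hu => Or.inr (Set.mem_iUnion_of_mem j (ih j hj hu))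

theorem esub_subset_of_mem {s t : VTerm σ} (h : t ∈ s.vsub) (S : σ.symb) :
    t.esub S ⊆ s.esub S := by
  induction s with
  | vertex =>
    obtain rfl : t = vertex := h
    rfl
  | pr R i ts ih =>
    rcases h with rfl | h
    · rfl
    · obtain ⟨j, hj⟩ := Set.mem_iUnion.1 h
      exact fun us hus => Or.inr ⟨j, ih j hj hus⟩

end VTerm

namespace Term

theorem vsub_subset_of_mem {q : Term σ} {t : VTerm σ} (h : t ∈ q.vsub) : t.vsub ⊆ q.vsub := by
  rcases q with s | ⟨R, ts⟩
  · exact VTerm.vsub_subset_of_mem h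
  · obtain ⟨j, hj⟩ := Set.mem_iUnion.1 h
    exact fun u hu => Set.mem_iUnion_of_mem j (VTerm.vsub_subset_of_mem hj hu)

theorem esub_subset_of_mem {q : Term σ} {t : VTerm σ} (h : t ∈ q.vsub) (S : σ.symb) :
    t.esub S ⊆ q.esub S := by
  rcases q with s | ⟨R, ts⟩
  · exact VTerm.esub_subset_of_mem h S
  · obtain ⟨j, hj⟩ := Set.mem_iUnion.1 h
    exact fun us hus => Or.inr ⟨j, VTerm.esub_subset_of_mem hj S hus⟩

end Term

theorem vsub_subset_TVs {tq : τ.symb → Term σ} {t : VTerm σ} (ht : t ∈ TVs tq) :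
    t.vsub ⊆ TVs tq := by
  obtain ⟨Q, hQ⟩ := Set.mem_iUnion.1 ht
  exact Set.subset_iUnion_of_subset Q (Term.vsub_subset_of_mem hQ)

theorem esub_subset_TEs {tq : τ.symb → Term σ} {t : VTerm σ} (ht : t ∈ TVs tq) (S : σ.symb) :
    t.esub S ⊆ TEs tq S := by
  obtain ⟨Q, hQ⟩ := Set.mem_iUnion.1 ht
  exact Set.subset_iUnion_of_subset Q (Term.esub_subset_of_mem hQ S)

theorem isHom_subtree_inclusion (R : σ.symb) (ts : Fin (σ.ar R) → VTerm σ) (j : Fin (σ.ar R)) :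
    IsHom (ts j).tree (ETerm.tree R ts) (fun v => ⟨j, v⟩) :=
  fun _ y hy => Or.inl ⟨j, y, hy, rfl⟩

section WitnessMaps

variable {Sc : σ.symb} {tq : τ.symb → Term σ}
  {x : ∀ R : τ.symb, Fin (τ.ar R) → (Fin (σ.ar Sc) → ((tq R).tree).dom)}
  {A A' : Struct σ} {B : Struct τ}

local notation "Γ" => GammaE Sc tq x
local notation "Ω" => OmegaE Sc tq x

/-- The map `Γ(h) : Γ(A) → Γ(A')` induced by a homomorphism `h : A → A'`, acting coordinatewise
on `Š`-edges. -/
def GammaE.map {h : A.dom → A'.dom} (hh : IsHom A A' h) : (Γ A).dom → (Γ A').dom :=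
  fun s => ⟨h ∘ s.1, hh Sc s.1 s.2⟩

theorem GammaE.generic_mem_rel (hx : ∀ R i, x R i ∈ ((tq R).tree).rel Sc) (R : τ.symb) :
    (fun i => ⟨x R i, hx R i⟩) ∈ (Γ (tq R).tree).rel R :=
  ⟨id, fun _ _ hy => hy, fun _ => rfl⟩

theorem GammaE.exists_eq_map_generic (hx : ∀ R i, x R i ∈ ((tq R).tree).rel Sc) {R : τ.symb}
    {y : Fin (τ.ar R) → (Γ A).dom} (hy : y ∈ (Γ A).rel R) :
    ∃ (h : (tq R).tree.dom → A.dom) (hh : IsHom (tq R).tree A h),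
      y = fun i => GammaE.map hh ⟨x R i, hx R i⟩ := by
  obtain ⟨h, hh, hyx⟩ := hy
  exact ⟨h, hh, funext fun i => Subtype.ext (hyx i)⟩

theorem GammaE.isHom_of_comp_map (hx : ∀ R i, x R i ∈ ((tq R).tree).rel Sc)
    {f : (Γ A).dom → B.dom}
    (hf : ∀ (R : τ.symb) (h : (tq R).tree.dom → A.dom) (hh : IsHom (tq R).tree A h),
      IsHom (Γ (tq R).tree) B (f ∘ GammaE.map hh)) :
    IsHom (Γ A) B f := by
  intro R y hy
  obtain ⟨h, hh, rfl⟩ := GammaE.exists_eq_map_generic hx hy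
  exact hf R h hh R _ (GammaE.generic_mem_rel hx R)

theorem UextE_of_mem (U : (Ω B).dom) {t : VTerm σ} (ht : t ∈ TVs tq) :
    UextE Sc tq x B U t = U.1 ⟨t, ht⟩ :=
  dif_pos ht

theorem UextE_vertex (U : (Ω B).dom) (ht : VTerm.vertex ∈ TVs tq) :
    UextE Sc tq x B U .vertex = Set.univ :=
  (UextE_of_mem U ht).trans (U.2.2 ht)

theorem isHom_of_mem_UextE {U : (Ω B).dom} {t : VTerm σ} (ht : t ∈ TVs tq)
    {f : (Γ t.tree).dom → B.dom} (hf : f ∈ UextE Sc tq x B U t) : IsHom (Γ t.tree) B f :=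
  U.2.1 ⟨t, ht⟩ f (UextE_of_mem U ht ▸ hf)

/-- `f` is a witness map for `g : A → Ω(B)` if it sends every `Š`-edge `s` of `A` to a witness of
the `Š`-edge `g^Š(s)` of `Ω(B)`. -/
def IsWitnessMap (g : A.dom → (Ω B).dom) (f : (Γ A).dom → B.dom) : Prop :=
  ∀ s : (Γ A).dom, IsWitness Sc tq x B (fun i => g (s.1 i)) (f s)

theorem exists_isWitnessMap {g : A.dom → (Ω B).dom} (hg : IsHom A (Ω B) g) :
    ∃ f, IsWitnessMap g f :=
  Classical.skolem.1 fun s => (hg Sc s.1 s.2).2 rfl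

theorem IsWitnessMap.comp_map {g : A'.dom → (Ω B).dom} {f : (Γ A').dom → B.dom}
    (hf : IsWitnessMap g f) {h : A.dom → A'.dom} (hh : IsHom A A' h) :
    IsWitnessMap (g ∘ h) (f ∘ GammaE.map hh) :=
  fun s => hf (GammaE.map hh s)

/-- A map on the `Š`-edges of `T(edge_R(ts))` is the union of its restrictions to the subtrees and,
if `R = Š`, its value at the root edge; so `hrestr` places `f` in the product `⨉` to which the
conditions (A1), (A2) or (B1), (B2) refer. -/
theorem IsWitnessMap.mem_UextE_pr_and_isHom {R : σ.symb} {ts : Fin (σ.ar R) → VTerm σ}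
    {g : (ETerm.tree R ts).dom → (Ω B).dom} {f : (Γ (ETerm.tree R ts)).dom → B.dom}
    (hf : IsWitnessMap g f) (hg : IsHom (ETerm.tree R ts) (Ω B) g) (hts : ts ∈ TEs tq R)
    (hrestr : ∀ j, restrE Sc tq x B R ts j f ∈ UextE Sc tq x B (g (edgeRoot R ts j)) (ts j)) :
    (∀ i, VTerm.pr R i ts ∈ TVs tq →
      f ∈ UextE Sc tq x B (g (edgeRoot R ts i)) (.pr R i ts)) ∧
    IsHom (Γ (ETerm.tree R ts)) B f := by
  by_cases hR : R = Sc
  · subst hR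
    obtain ⟨hB1, hB2⟩ := hf ⟨edgeRoot R ts, rootEdgeMem R ts⟩ ts hts
    exact ⟨fun i hi => hB1 i hi f ⟨hrestr, rfl⟩, hB2 f ⟨hrestr, rfl⟩⟩
  · obtain ⟨hA1, hA2⟩ := (hg R _ (rootEdgeMem R ts)).1 hR
    exact ⟨fun i hi => hA1 ts hts i hi f hrestr, hA2 ts hts f hrestr⟩

theorem IsWitnessMap.mem_UextE_root {t : VTerm σ} {g : t.tree.dom → (Ω B).dom}
    {f : (Γ t.tree).dom → B.dom} (hf : IsWitnessMap g f) (hg : IsHom t.tree (Ω B) g)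
    (ht : t ∈ TVs tq) : f ∈ UextE Sc tq x B (g t.root) t := by
  induction t with
  | vertex => exact UextE_vertex _ ht ▸ Set.mem_univ f
  | pr R i ts ih =>
    have hts : ts ∈ TEs tq R := esub_subset_TEs ht R (VTerm.children_mem_esub_pr R i ts)
    refine (hf.mem_UextE_pr_and_isHom hg hts fun j => ?_).1 i ht
    have hincl := isHom_subtree_inclusion R ts j
    exact ih j (hf.comp_map hincl) (hg.comp hincl)
      (vsub_subset_TVs ht (VTerm.child_mem_vsub_pr R i j ts))

theorem IsWitnessMap.isHom_of_term {q : Term σ} {g : q.tree.dom → (Ω B).dom}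
    {f : (Γ q.tree).dom → B.dom} (hf : IsWitnessMap g f) (hg : IsHom q.tree (Ω B) g)
    (hqV : q.vsub ⊆ TVs tq) (hqE : ∀ S, q.esub S ⊆ TEs tq S) : IsHom (Γ q.tree) B f := by
  rcases q with t | ⟨R, ts⟩
  · have ht : t ∈ TVs tq := hqV t.self_mem_vsub
    exact isHom_of_mem_UextE ht (hf.mem_UextE_root hg ht)
  · have hts : ts ∈ TEs tq R := hqE R (Or.inl ⟨rfl, rfl⟩)
    refine (hf.mem_UextE_pr_and_isHom hg hts fun j => ?_).2
    have hincl := isHom_subtree_inclusion R ts j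
    exact (hf.comp_map hincl).mem_UextE_root (hg.comp hincl)
      (hqV (Set.mem_iUnion_of_mem j (ts j).self_mem_vsub))

theorem IsWitnessMap.isHom {g : A.dom → (Ω B).dom} {f : (Γ A).dom → B.dom}
    (hf : IsWitnessMap g f) (hg : IsHom A (Ω B) g)
    (hx : ∀ R i, x R i ∈ ((tq R).tree).rel Sc) : IsHom (Γ A) B f :=
  GammaE.isHom_of_comp_map hx fun R _ hh =>
    (hf.comp_map hh).isHom_of_term (hg.comp hh)
      (Set.subset_iUnion (fun R => (tq R).vsub) R)
      (fun S => Set.subset_iUnion (fun R => (tq R).esub S) R)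

end WitnessMaps

/-- if `g : A → Ω(B)` is a homomorphism, then there is a homomorphism
`Γ(A) → B`; explicitly, any map `f` sending each `Š`-edge `s` of `A` to a witness of the edge
`g^{Š}(s)` of `Ω(B)` is such a homomorphism. -/
theorem omegaE_hard_direction {σ τ : Signature} (Sc : σ.symb) (tq : τ.symb → Term σ)
    (x : ∀ R : τ.symb, Fin (τ.ar R) → (Fin (σ.ar Sc) → ((tq R).tree).dom))
    (hx : ∀ R i, x R i ∈ ((tq R).tree).rel Sc)
    (A : Struct σ) (B : Struct τ)
    (g : A.dom → (OmegaE Sc tq x B).dom) (hg : IsHom A (OmegaE Sc tq x B) g) :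
    HomEx (GammaE Sc tq x A) B ∧
    (∀ f : (GammaE Sc tq x A).dom → B.dom,
      (∀ s : (GammaE Sc tq x A).dom, IsWitness Sc tq x B (fun i => g (s.1 i)) (f s)) →
      IsHom (GammaE Sc tq x A) B f) := by
  obtain ⟨f, hf⟩ := exists_isWitnessMap hg
  exact ⟨⟨f, hf.isHom hg hx⟩, fun _ hw => IsWitnessMap.isHom hw hg hx⟩
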